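/- Let X be a connected, infinite, locally finite simple graph and let G be a group acting faithfully and transitively on X by automorphisms, whose commutator subgroup G' is cyclic of prime order p, generated by an element g. Let v : ℤ → V(X) be a map such that v(i) is adjacent to v(i+1) for all i ∈ ℤ and the G'-orbits G'·v(i), i ∈ ℤ, are pairwise distinct, and suppose k ≥ 1 and v(0) is adjacent in X to g·v(k). Then for every vertex u ∈ G'·v(0) there exists a hamiltonian path of the induced subgraph of X on ⋃_{i=0}^{k} G'·v(i) that starts at u and ends at a vertex of G'·v(k). -/

import Mathlib

/-!
A normal subgroup of prime order of a group acting faithfully and transitively acts freely: a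
nontrivial point stabiliser would be the whole subgroup, and its fixed points, permuted by the big
group, would be all points. So `G'` acts freely, and the block is the disjoint union of the `p`
translates by `G'` of the path `v 0, …, v k`.

The jump edge joins the last vertex of the translate by `h * g⁻¹ ^ t` to the first vertex of the
translate by `h * g⁻¹ ^ (t + 1)`. Running through the translates for `t = 0, …, p - 1` in this order
therefore gives a hamiltonian path, which starts at `h • v 0` for any prescribed `h ∈ G'`.
-/

open MulAction Set

section FreeAction

variable {G V : Type*} [Group G] [MulAction G V]

theorem isCancelSMul_of_normal_of_prime_card [FaithfulSMul G V] [IsPretransitive G V]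
    {N : Subgroup G} [N.Normal] (hN : (Nat.card N).Prime) : IsCancelSMul N V := by
  refine isCancelSMul_iff_stabilizer_eq_bot.mpr fun x => ?_
  have : Fact (Nat.card N).Prime := ⟨hN⟩
  refine (stabilizer N x).eq_bot_or_eq_top_of_prime_card.resolve_right fun htop => hN.ne_one ?_
  have hx : x ∈ fixedPoints N V := fun a => (htop ▸ Subgroup.mem_top a : a ∈ stabilizer N x)
  have hfixed (y : V) : y ∈ fixedPoints N V := by
    obtain ⟨b, rfl⟩ := exists_smul_eq G x y
    exact smul_mem_fixedPoints_of_normal b hx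
  have hbot : N = ⊥ := N.eq_bot_iff_forall.mpr fun a ha =>
    faithfulSMul_iff.mp ‹_› a fun y => hfixed y ⟨a, ha⟩
  exact Subgroup.card_eq_one.mpr hbot

theorem bijOn_smul_biUnion_orbit [IsCancelSMul G V] {ι : Type*} {v : ι → V} {s : Set ι}
    (hv : InjOn (fun i => orbit G (v i)) s) :
    BijOn (fun q : G × ι => q.1 • v q.2) (univ ×ˢ s) (⋃ i ∈ s, orbit G (v i)) := by
  refine ⟨?_, ?_, ?_⟩
  · rintro ⟨a, i⟩ ⟨-, hi⟩
    exact mem_biUnion hi (mem_orbit _ a)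
  · rintro ⟨a, i⟩ ⟨-, hi⟩ ⟨b, j⟩ ⟨-, hj⟩ (h : a • v i = b • v j)
    obtain rfl : i = j := hv hi hj <| by
      simpa only [orbit_smul] using congrArg (orbit G) h
    rw [IsCancelSMul.right_cancel _ _ _ h]
  · intro w hw
    obtain ⟨i, hi, a, rfl⟩ := mem_iUnion₂.mp hw
    exact ⟨(a, i), ⟨mem_univ a, hi⟩, rfl⟩

end FreeAction

section CyclicGroup

variable {G : Type*} [Group G]

theorem mem_zpowers_mk_of_zpowers_eq {g : G} {N : Subgroup G} (hg : Subgroup.zpowers g = N)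
    (x : N) : x ∈ Subgroup.zpowers (⟨g, hg ▸ Subgroup.mem_zpowers g⟩ : N) := by
  subst hg
  obtain ⟨_, c, rfl⟩ := x
  exact ⟨c, rfl⟩

theorem bijOn_mul_pow_Iio_card [Finite G] {g : G} (hg : ∀ x, x ∈ Subgroup.zpowers g) (h : G) :
    BijOn (fun t : ℕ => h * g ^ t) (Iio (Nat.card G)) univ := by
  classical
  have hpow : BijOn (fun t : ℕ => g ^ t) (Iio (Nat.card G)) univ := by
    rw [← orderOf_eq_card_of_forall_mem_zpowers hg]
    refine ⟨mapsTo_univ _ _, pow_injOn_Iio_orderOf, fun x _ => ?_⟩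
    simpa using mem_zpowers_iff_mem_range_orderOf.mp (hg x)
  exact ((Group.mulLeft_bijective h).bijOn_univ).comp hpow

end CyclicGroup

theorem bijOn_div_mod_Iio_mul (N : ℕ) {m : ℕ} (hm : 0 < m) :
    BijOn (fun n => (n / m, n % m)) (Iio (N * m)) (Iio N ×ˢ Iio m) := by
  refine ⟨fun n hn => ⟨Nat.div_lt_of_lt_mul (mul_comm N m ▸ hn), Nat.mod_lt n hm⟩, ?_, ?_⟩
  · intro n _ n' _ h
    obtain ⟨hdiv, hmod⟩ := Prod.mk.inj h
    rw [← Nat.div_add_mod n m, hdiv, hmod, Nat.div_add_mod]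
  · rintro ⟨t, i⟩ ⟨ht : t < N, hi : i < m⟩
    refine ⟨i + m * t, ?_, ?_⟩
    · calc i + m * t < m + m * t := by gcongr
        _ = (t + 1) * m := by ring
        _ ≤ N * m := by gcongr; exact ht
    · simp [Nat.add_mul_div_left _ _ hm, Nat.div_eq_of_lt hi, Nat.mod_eq_of_lt hi]

section Walk

variable {V : Type*} {X : SimpleGraph V} {s : ℕ → V} {N : ℕ}

theorem exists_walk_support_eq_map_range (hs : ∀ n < N, X.Adj (s n) (s (n + 1))) :
    ∃ q : X.Walk (s 0) (s N), q.support = (List.range (N + 1)).map s := by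
  induction N with
  | zero => exact ⟨.nil, rfl⟩
  | succ N ih =>
    obtain ⟨q, hq⟩ := ih fun n hn => hs n (hn.trans N.lt_succ_self)
    refine ⟨q.concat (hs N N.lt_succ_self), ?_⟩
    rw [SimpleGraph.Walk.support_concat, hq, List.range_succ (n := N + 1), List.map_append,
      List.map_singleton]

theorem exists_isHamiltonian_induce_of_bijOn [DecidableEq V] {B : Set V}
    (hs : ∀ n < N, X.Adj (s n) (s (n + 1))) (hB : BijOn s (Iio (N + 1)) B) :
    ∃ (h₀ : s 0 ∈ B) (hN : s N ∈ B) (q : (X.induce B).Walk ⟨s 0, h₀⟩ ⟨s N, hN⟩),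
      q.IsHamiltonian := by
  obtain ⟨q, hq⟩ := exists_walk_support_eq_map_range hs
  have hmem (w : V) : w ∈ q.support ↔ w ∈ B := by
    rw [hq, ← hB.image_eq]
    simp
  have hnodup : q.support.Nodup := by
    rw [hq]
    exact List.nodup_range.map_on fun n hn m hm =>
      hB.injOn (List.mem_range.mp hn) (List.mem_range.mp hm)
  refine ⟨_, _, q.induce B fun w => (hmem w).mp, ?_⟩
  refine SimpleGraph.Walk.IsPath.isHamiltonian_of_mem (.mk' ?_) fun w => ?_
  · rw [SimpleGraph.Walk.support_induce]
    exact .of_map Subtype.val (by rwa [List.attachWith_map_subtype_val])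
  · rw [SimpleGraph.Walk.support_induce, List.mem_attachWith]
    exact (hmem w).mpr w.2

end Walk

section OrbitBlock

variable {H V : Type*} [Group H] [MulAction H V]

variable (H) in
/-- The block `⋃_{0 ≤ i ≤ k} H·v(i)` spanned by the first `k + 1` orbits along a sequence `v` of
vertices. -/
def orbitBlock (v : ℕ → V) (k : ℕ) : Set V :=
  {w | ∃ i : ℕ, i ≤ k ∧ w ∈ orbit H (v i)}

/-- The sequence of vertices that runs through the translate of `v 0, …, v k` by `h`, then through
the one by `h * g⁻¹`, then through the one by `h * g⁻¹ ^ 2`, and so on. It is the hamiltonian path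
of the block, read off by division with remainder by `k + 1`. -/
def blockTour (h g : H) (v : ℕ → V) (k n : ℕ) : V :=
  (h * g⁻¹ ^ (n / (k + 1))) • v (n % (k + 1))

theorem orbitBlock_eq_biUnion (v : ℕ → V) (k : ℕ) :
    orbitBlock H v k = ⋃ i ∈ Iio (k + 1), orbit H (v i) := by
  ext w
  simp [orbitBlock]

theorem blockTour_add_mul (h g : H) (v : ℕ → V) {k i : ℕ} (hi : i ≤ k) (t : ℕ) :
    blockTour h g v k (i + (k + 1) * t) = (h * g⁻¹ ^ t) • v i := by
  have hlt : i < k + 1 := Nat.lt_succ_of_le hi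
  rw [blockTour, Nat.add_mul_div_left _ _ k.succ_pos, Nat.add_mul_mod_self_left,
    Nat.div_eq_of_lt hlt, Nat.mod_eq_of_lt hlt, zero_add]

theorem blockTour_zero (h g : H) (v : ℕ → V) (k : ℕ) : blockTour h g v k 0 = h • v 0 := by
  simp [blockTour]

theorem adj_blockTour_succ {X : SimpleGraph V}
    (hauto : ∀ (a : H) (u w : V), X.Adj u w → X.Adj (a • u) (a • w)) (h : H) {g : H}
    {v : ℕ → V} {k : ℕ} (hadj : ∀ i < k, X.Adj (v i) (v (i + 1)))
    (hjump : X.Adj (v 0) (g • v k)) (n : ℕ) :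
    X.Adj (blockTour h g v k n) (blockTour h g v k (n + 1)) := by
  obtain ⟨t, i, hi, rfl⟩ : ∃ t i, i ≤ k ∧ n = i + (k + 1) * t :=
    ⟨n / (k + 1), n % (k + 1), Nat.le_of_lt_succ (Nat.mod_lt n k.succ_pos),
      (Nat.mod_add_div n (k + 1)).symm⟩
  rw [blockTour_add_mul h g v hi]
  rcases hi.lt_or_eq with hlt | rfl
  · rw [add_right_comm, blockTour_add_mul h g v hlt]
    exact hauto _ _ _ (hadj i hlt)
  · have hnext : i + (i + 1) * t + 1 = 0 + (i + 1) * (t + 1) := by ring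
    have hedge := hauto (h * g⁻¹ ^ (t + 1)) _ _ hjump.symm
    rw [smul_smul, pow_succ, ← mul_assoc, inv_mul_cancel_right] at hedge
    rwa [hnext, blockTour_add_mul h g v i.zero_le, pow_succ, ← mul_assoc]

theorem bijOn_blockTour [Finite H] [IsCancelSMul H V] {g : H}
    (hg : ∀ x, x ∈ Subgroup.zpowers g) (h : H) {v : ℕ → V} {k : ℕ}
    (horb : InjOn (fun i => orbit H (v i)) (Iic k)) :
    BijOn (blockTour h g v k) (Iio (Nat.card H * (k + 1))) (orbitBlock H v k) := by
  have hginv : ∀ x, x ∈ Subgroup.zpowers g⁻¹ := by simpa only [Subgroup.zpowers_inv] using hg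
  have horb_lt : InjOn (fun i => orbit H (v i)) (Iio (k + 1)) :=
    horb.mono fun _ => Nat.le_of_lt_succ
  rw [orbitBlock_eq_biUnion]
  exact (bijOn_smul_biUnion_orbit horb_lt).comp <|
    ((bijOn_mul_pow_Iio_card hginv h).prodMap (bijOn_id _)).comp <|
      bijOn_div_mod_Iio_mul (Nat.card H) k.succ_pos

theorem block_has_hamiltonian_path_entrance_to_exit_general [DecidableEq V] [Finite H]
    [IsCancelSMul H V] {X : SimpleGraph V}
    (hauto : ∀ (a : H) (u w : V), X.Adj u w → X.Adj (a • u) (a • w))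
    {g : H} (hg : ∀ x, x ∈ Subgroup.zpowers g) {v : ℕ → V} {k : ℕ}
    (hadj : ∀ i < k, X.Adj (v i) (v (i + 1)))
    (horb : InjOn (fun i => orbit H (v i)) (Iic k)) (hjump : X.Adj (v 0) (g • v k))
    {u : V} (hu : u ∈ orbit H (v 0)) :
    ∃ (huB : u ∈ orbitBlock H v k) (w : V) (_ : w ∈ orbit H (v k)) (hwB : w ∈ orbitBlock H v k)
      (q : (X.induce (orbitBlock H v k)).Walk ⟨u, huB⟩ ⟨w, hwB⟩), q.IsHamiltonian := by
  obtain ⟨h, rfl : h • v 0 = u⟩ := hu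
  obtain ⟨r, hr⟩ : ∃ r, Nat.card H = r + 1 := Nat.exists_eq_add_one.mpr Nat.card_pos
  have hlast : Nat.card H * (k + 1) = k + (k + 1) * r + 1 := by rw [hr]; ring
  have htour := bijOn_blockTour hg h horb
  rw [hlast] at htour
  obtain ⟨h₀, hend, q, hq⟩ := exists_isHamiltonian_induce_of_bijOn
    (fun n _ => adj_blockTour_succ hauto h hadj hjump n) htour
  have hexit : blockTour h g v k (k + (k + 1) * r) ∈ orbit H (v k) := by
    rw [blockTour_add_mul h g v le_rfl]
    exact mem_orbit _ _
  have hstart := blockTour_zero h g v k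
  refine ⟨hstart ▸ h₀, _, hexit, hend, q.copy (Subtype.ext hstart) rfl, fun w => ?_⟩
  rw [SimpleGraph.Walk.support_copy]
  exact hq w

end OrbitBlock

/-- blocks have hamiltonian paths from any entrance vertex to the
exit. `X` is a connected, infinite, locally finite graph, `G` acts faithfully and
transitively on `X` by automorphisms, `G'` is cyclic of prime order `p` generated
by `g`, `v : ℤ → V` is a path whose `G'`-orbits are pairwise distinct, `k ≥ 1` and
`v 0` is adjacent to `g • v k`. Then for every vertex `u` in the entrance orbit
`G'·v(0)`, the subgraph induced on `⋃_{0 ≤ i ≤ k} G'·v(i)` has a hamiltonian path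
starting at `u` and ending at a vertex of the exit orbit `G'·v(k)`. -/
theorem block_has_hamiltonian_path_entrance_to_exit
    {V : Type*} [Infinite V] [DecidableEq V] (X : SimpleGraph V)
    (hconn : X.Connected) (hlf : ∀ u : V, (X.neighborSet u).Finite)
    (G : Type*) [Group G] [MulAction G V]
    (hauto : ∀ (a : G) (u w : V), X.Adj u w → X.Adj (a • u) (a • w))
    (hfaithful : ∀ a : G, (∀ x : V, a • x = x) → a = 1)
    (htrans : ∀ u w : V, ∃ a : G, a • u = w)
    (p : ℕ) (hp : p.Prime) (hcard : Nat.card (commutator G) = p)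
    (g : G) (hg : Subgroup.zpowers g = commutator G)
    (v : ℤ → V) (hadj : ∀ i : ℤ, X.Adj (v i) (v (i + 1)))
    (horb : ∀ i j : ℤ,
      MulAction.orbit (commutator G) (v i) = MulAction.orbit (commutator G) (v j) → i = j)
    (k : ℕ) (hk : 1 ≤ k)
    (hjump : X.Adj (v 0) (g • v (k : ℤ))) :
    ∃ B : Set V,
      B = {w : V | ∃ i : ℕ, i ≤ k ∧ w ∈ MulAction.orbit (commutator G) (v (i : ℤ))} ∧
      ∀ u ∈ MulAction.orbit (commutator G) (v 0),
        ∃ (hu : u ∈ B) (w : V) (hw : w ∈ MulAction.orbit (commutator G) (v (k : ℤ)))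
          (hwB : w ∈ B)
          (q : (SimpleGraph.induce B X).Walk ⟨u, hu⟩ ⟨w, hwB⟩),
          q.IsHamiltonian := by
  have : FaithfulSMul G V := faithfulSMul_iff.mpr hfaithful
  have : IsPretransitive G V := ⟨htrans⟩
  have hprime : (Nat.card (commutator G)).Prime := hcard ▸ hp
  have : Finite (commutator G) := Nat.finite_of_card_ne_zero hprime.ne_zero
  have : IsCancelSMul (commutator G) V := isCancelSMul_of_normal_of_prime_card hprime
  exact ⟨orbitBlock (commutator G) (fun i : ℕ => v i) k, rfl, fun u hu =>
    block_has_hamiltonian_path_entrance_to_exit_general (H := commutator G) (fun a => hauto a)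
      (mem_zpowers_mk_of_zpowers_eq hg) (fun i _ => mod_cast hadj i)
      (fun i _ j _ h => Int.ofNat_inj.mp (horb i j h)) hjump hu⟩
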